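/- Let f ∈ R := MvPolynomial ℂ (Fin 2) and let x, y ∈ ℂ⟦T⟧ = PowerSeries ℂ, with φ := MvPolynomial.aeval ![x, y] : R → ℂ⟦T⟧. Assume φ f = 0. Let v⟨x,y⟩ := ((Dx)² + (Dy)²)·((Dx)·(D³y) − (D³x)·(Dy)) + 3·((Dx)·(D²x) + (Dy)·(D²y))·((D²x)·(Dy) − (Dx)·(D²y)). Then ord(φ(v_f)) + 6·ord(Dx) = 6·ord(φ(f_y)) + ord(v⟨x,y⟩) as an equality in ℕ∞. -/

import Mathlib

open MvPolynomial

noncomputable section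

/-- Partial derivative with respect to the first variable `X`. -/
def dx (f : MvPolynomial (Fin 2) ℂ) : MvPolynomial (Fin 2) ℂ := pderiv 0 f

/-- Partial derivative with respect to the second variable `Y`. -/
def dy (f : MvPolynomial (Fin 2) ℂ) : MvPolynomial (Fin 2) ℂ := pderiv 1 f

/-- The inflection polynomial `i_f = f_y²·f_xx − 2·f_x·f_y·f_xy + f_x²·f_yy`. -/
def infl (f : MvPolynomial (Fin 2) ℂ) : MvPolynomial (Fin 2) ℂ :=
  (dy f) ^ 2 * dx (dx f) - 2 * dx f * dy f * dy (dx f) + (dx f) ^ 2 * dy (dy f)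

/-- The vertex polynomial
`v_f = (f_x² + f_y²)(f_x³ f_yyy − 3 f_x² f_y f_xyy + 3 f_x f_y² f_xxy − f_y³ f_xxx)
      − 3((f_x² − f_y²) f_xy − f_x f_y (f_xx − f_yy)) · i_f`. -/
def vert (f : MvPolynomial (Fin 2) ℂ) : MvPolynomial (Fin 2) ℂ :=
  ((dx f) ^ 2 + (dy f) ^ 2) *
      ((dx f) ^ 3 * dy (dy (dy f)) - 3 * (dx f) ^ 2 * dy f * dy (dy (dx f)) +
        3 * dx f * (dy f) ^ 2 * dy (dx (dx f)) - (dy f) ^ 3 * dx (dx (dx f))) -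
    3 * (((dx f) ^ 2 - (dy f) ^ 2) * dy (dx f) - dx f * dy f * (dx (dx f) - dy (dy f))) *
      infl f

/-- The canonical map from polynomials to formal power series in two variables. -/
def ι : MvPolynomial (Fin 2) ℂ →+* MvPowerSeries (Fin 2) ℂ :=
  MvPolynomial.coeToMvPowerSeries.ringHom

/-- The local intersection number at the origin of the curves `g = 0` and `h = 0`:
the `ℂ`-dimension of `ℂ⟦x,y⟧/⟨g,h⟩`. -/
def interMult (g h : MvPolynomial (Fin 2) ℂ) : ℕ :=
  Module.finrank ℂ (MvPowerSeries (Fin 2) ℂ ⧸ Ideal.span {ι g, ι h})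

end
/-- The formal derivative on `ℂ⟦T⟧`. -/
noncomputable def D : PowerSeries ℂ → PowerSeries ℂ := fun f => PowerSeries.derivative ℂ f

/-- The vertex series of the parametrised curve `(x, y)`:
`v = (x'² + y'²)(x'y''' − x'''y') + 3(x'x'' + y'y'')(x''y' − x'y'')`. -/
noncomputable def vser (x y : PowerSeries ℂ) : PowerSeries ℂ :=
  ((D x) ^ 2 + (D y) ^ 2) * (D x * D (D (D y)) - D (D (D x)) * D y) +
    3 * (D x * D (D x) + D y * D (D y)) * (D (D x) * D y - D x * D (D y))

lemma chain_aux (x y : PowerSeries ℂ) (f : MvPolynomial (Fin 2) ℂ) :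
    D (aeval ![x, y] f) = aeval ![x, y] (dx f) * D x + aeval ![x, y] (dy f) * D y := by
  unfold D dx dy
  induction f using MvPolynomial.induction_on with
  | C a => simp [← MvPolynomial.algebraMap_eq]
  | add p q hp hq => simp only [map_add, hp, hq]; ring
  | mul_X p i hp =>
    fin_cases i <;> simp [hp, Derivation.leibniz, pderiv_X] <;> ring

lemma dxdy_comm (f : MvPolynomial (Fin 2) ℂ) : dx (dy f) = dy (dx f) := by
  unfold dx dy
  induction f using MvPolynomial.induction_on with
  | C a => simp
  | add p q hp hq => simp only [map_add, hp, hq]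
  | mul_X p i hp =>
    fin_cases i <;> simp [hp, Derivation.leibniz, pderiv_X] <;> ring

lemma D_mul (a b : PowerSeries ℂ) : D (a * b) = a * D b + b * D a := by
  simp [D, Derivation.leibniz]
lemma D_add (a b : PowerSeries ℂ) : D (a + b) = D a + D b := by
  simp [D]

lemma alg_aux {K : Type*} [Field K] (a b p q p1 q1 p2 q2 fxx fxy fyy fxxx fxxy fxyy fyyy : K)
    (hp : p ≠ 0) (hb : b ≠ 0)
    (h1 : a * p + b * q = 0)
    (h2 : fxx * p ^ 2 + 2 * fxy * p * q + fyy * q ^ 2 + a * p1 + b * q1 = 0)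
    (h3 : fxxx * p ^ 3 + 3 * fxxy * p ^ 2 * q + 3 * fxyy * p * q ^ 2 + fyyy * q ^ 3
      + 3 * (fxx * p * p1 + fxy * (p * q1 + q * p1) + fyy * q * q1) + a * p2 + b * q2 = 0) :
    p ^ 6 * ((a ^ 2 + b ^ 2) * (a ^ 3 * fyyy - 3 * a ^ 2 * b * fxyy + 3 * a * b ^ 2 * fxxy
        - b ^ 3 * fxxx) - 3 * ((a ^ 2 - b ^ 2) * fxy - a * b * (fxx - fyy)) *
        (b ^ 2 * fxx - 2 * a * b * fxy + a ^ 2 * fyy)) =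
    b ^ 6 * ((p ^ 2 + q ^ 2) * (p * q2 - p2 * q) + 3 * (p * p1 + q * q1) * (p1 * q - p * q1)) := by
  have ea : a = -(b * q) / p := by field_simp; linear_combination h1
  subst ea
  have e1 : fxx = -(2 * fxy * p * q + fyy * q ^ 2 + (-(b * q) / p) * p1 + b * q1) / p ^ 2 := by
    field_simp at h2 ⊢; linear_combination h2
  have e2 : fxxx = -(3 * fxxy * p ^ 2 * q + 3 * fxyy * p * q ^ 2 + fyyy * q ^ 3
      + 3 * (fxx * p * p1 + fxy * (p * q1 + q * p1) + fyy * q * q1) + (-(b * q) / p) * p2 + b * q2)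
      / p ^ 3 := by
    field_simp at h3 ⊢; linear_combination h3
  rw [e2, e1]
  field_simp
  ring

theorem vertex_pullback_order_identity
    (f : MvPolynomial (Fin 2) ℂ) (x y : PowerSeries ℂ)
    (hf : MvPolynomial.aeval ![x, y] f = 0) :
    (MvPolynomial.aeval ![x, y] (vert f)).order + 6 * (D x).order
      = 6 * (MvPolynomial.aeval ![x, y] (dy f)).order + (vser x y).order := by
  have h1 := chain_aux x y f
  have D0 : D 0 = 0 := by simp [D]
  rw [hf, D0] at h1
  have h2 := congrArg D h1
  rw [D0, D_add, D_mul, D_mul, chain_aux, chain_aux, dxdy_comm] at h2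
  have h3 := congrArg D h2
  simp only [D0, D_add, D_mul, chain_aux, dxdy_comm] at h3
  by_cases hp : D x = 0
  · rw [hp] at h1
    have : aeval ![x, y] (dy f) = 0 ∨ D y = 0 := by simpa using h1.symm
    rcases this with h | h
    · simp [hp, h]
    · simp [hp, h, vser]
  by_cases hb : aeval ![x, y] (dy f) = 0
  · have ha : aeval ![x, y] (dx f) = 0 := by simpa [hb, hp] using h1.symm
    have : aeval ![x, y] (vert f) = 0 := by
      simp only [vert, infl, map_sub, map_add, map_mul, map_pow, map_ofNat]
      rw [ha, hb]; ring
    simp [this, hb]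
  have key : aeval ![x, y] (vert f) * D x ^ 6 = aeval ![x, y] (dy f) ^ 6 * vser x y := by
    simp only [vert, infl, map_sub, map_add, map_mul, map_pow, map_ofNat]
    unfold vser
    let g := algebraMap (PowerSeries ℂ) (FractionRing (PowerSeries ℂ))
    have hg : Function.Injective g := IsFractionRing.injective _ _
    have H := alg_aux (g (aeval ![x, y] (dx f))) (g (aeval ![x, y] (dy f))) (g (D x)) (g (D y))
      (g (D (D x))) (g (D (D y))) (g (D (D (D x)))) (g (D (D (D y))))
      (g (aeval ![x, y] (dx (dx f)))) (g (aeval ![x, y] (dy (dx f)))) (g (aeval ![x, y] (dy (dy f))))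
      (g (aeval ![x, y] (dx (dx (dx f))))) (g (aeval ![x, y] (dy (dx (dx f)))))
      (g (aeval ![x, y] (dy (dy (dx f))))) (g (aeval ![x, y] (dy (dy (dy f)))))
      (by simpa using hg.ne hp) (by simpa using hg.ne hb)
      (by simpa using (congrArg g h1).symm)
      (by have := congrArg g h2; simp only [map_add, map_mul, map_zero] at this
          linear_combination -this)
      (by have := congrArg g h3; simp only [map_add, map_mul, map_zero] at this
          linear_combination -this)
    apply hg
    simp only [map_sub, map_add, map_mul, map_pow, map_ofNat]
    linear_combination H
  have := congrArg PowerSeries.order key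
  simpa [PowerSeries.order_mul, PowerSeries.order_pow] using this
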